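/- Let k ≥ 0 and n ≥ 3k − 1 be integers, and let b_0, b_1, …, b_k be integers. Let B = Σ_{ℓ=0}^{k} b_ℓ · A_{n,k,k,ℓ}, a square integer matrix indexed by the k-element subsets of {1,…,n}. For 0 ≤ s ≤ k let M_s(B) be the (k−s+1) × (k−s+1) integer matrix with rows and columns indexed by s ≤ i, j ≤ k and entries M_s(B)(i,j) = C(j−s, i−s) · Σ_{ℓ=0}^{k} b_ℓ · f_i(j; n, k, k, ℓ). Then there is an isomorphism of abelian groups S(B) ≅ ⊕_{s=0}^{k} S(M_s(B))^{m_s}, where m_s = C(n,s) − 2C(n,s−1) + C(n,s−2). -/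

import Mathlib

open scoped Classical

/-- Integer binomial coefficient with the convention `C x y = 0` unless `0 ≤ y ≤ x`. -/
noncomputable def C (x y : ℤ) : ℤ :=
  if 0 ≤ y ∧ y ≤ x then (x.toNat).choose y.toNat else 0

/-- The `k`-element subsets of `{1,…,n}`. -/
def ksubsets (n k : ℕ) : Finset (Finset ℕ) :=
  (Finset.Icc 1 n).powerset.filter fun A => A.card = k

/-- The subset intersection matrix `A_{n,kr,kc,ℓ}`. -/
noncomputable def interMat (n kr kc ℓ : ℕ) :
    Matrix ↥(ksubsets n kr) ↥(ksubsets n kc) ℤ :=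
  Matrix.of fun A B => if ((A : Finset ℕ) ∩ (B : Finset ℕ)).card = ℓ then 1 else 0

/-- `f_i(j; n, kr, kc, ℓ)`. -/
noncomputable def f (n kr kc ℓ i j : ℕ) : ℤ :=
  ∑ v ∈ Finset.range (i + 1),
    (-1 : ℤ) ^ (i + v) * (i.choose v) *
      (C ((kr : ℤ) - v) ((ℓ : ℤ) - v) * C ((n : ℤ) - kr - j + v) ((kc : ℤ) - ℓ - j + v))

/-- The Smith group of an integer matrix. -/
abbrev SmithGroup {ρ γ : Type*} (M : Matrix ρ γ ℤ) : Type _ :=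
  (γ → ℤ) ⧸ Submodule.span ℤ (Set.range fun r : ρ => M r)

/-- The matrix `M_s(B)` with rows and columns indexed by `s ≤ i, j ≤ k`
(`i = s + t`, `j = s + u`): `M_s(B)(i,j) = C(j−s,i−s)·Σ_ℓ b_ℓ f_i(j;ℓ)`. -/
noncomputable def MsB (n k : ℕ) (b : ℕ → ℤ) (s : ℕ) :
    Matrix (Fin (k - s + 1)) (Fin (k - s + 1)) ℤ :=
  Matrix.of fun t u =>
    ((u : ℕ).choose (t : ℕ) : ℤ) *
      ∑ ℓ ∈ Finset.range (k + 1), b ℓ * f n k k ℓ (s + t) (s + u)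

/-- `m_s = C(n,s) − 2C(n,s−1) + C(n,s−2)`. -/
noncomputable def msMult (n s : ℕ) : ℤ :=
  C n s - 2 * C n ((s : ℤ) - 1) + C n ((s : ℤ) - 2)

/-!
Recording the superset sums `J ↦ ∑_{K ⊇ J} x K` on ballot sets `J` of size `j ≤ k` identifies
`ℤ^(k-subsets)` with `⨁_{j ≤ k} ℤ^(ballot j-sets)`. In these coordinates `B` becomes block
triangular: its component from size `i` to size `j` is `∑_ℓ b_ℓ f_i(j; n, k, k, ℓ)` times the
inclusion map `W i j`.

The inclusion maps satisfy `W i j ∘ W s i = C(j - s, i - s) W s j`. Choose a complement `G s` of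
the functions of degree `< s` on ballot `s`-sets. If for every `j` the maps `W s j` with `s ≤ j`
together send `⨁_{s ≤ j} G s` isomorphically onto `ℤ^(ballot j-sets)`, then `B` acts on the copies
of `G s` in the sizes `s, …, k` by the matrix `M_s(B)` with scalar entries in `End (G s)`, and the
multiplicity of `M_s(B)` is the rank of `G s`.

Both the existence of `G s` and this isomorphism follow from the fact that the functions of degree
`≤ j` on ballot `k`-sets contain a direct summand of `ℤ^(ballot k-sets)` whose rank is the number of
ballot `j`-sets, provided `2k + j ≤ n`. This is an induction on `n`, splitting functions by link and
deletion of the largest point; with `j = k - 1` it is where `n ≥ 3k - 1` is needed.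
-/

section SplitRank

variable {R M N P ι : Type*} [CommRing R] [AddCommGroup M] [Module R M] [AddCommGroup N]
  [Module R N] [AddCommGroup P] [Module R P]

/-- `HasSplitRank V r` says that some coordinate map `M → R ^ r` is onto already on `V`; over any
`R` this means that `V` contains a free direct summand of `M` of rank `r`. -/
def HasSplitRank (V : Submodule R M) (r : ℕ) : Prop :=
  ∃ ρ : M →ₗ[R] (Fin r → R), V.map ρ = ⊤

lemma hasSplitRank_top [Fintype ι] : HasSplitRank (⊤ : Submodule R (ι → R)) (Fintype.card ι) :=
  ⟨LinearMap.funLeft R R (Fintype.equivFin ι).symm, by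
    rw [Submodule.map_top, LinearMap.range_eq_top]
    exact LinearMap.funLeft_surjective_of_injective _ _ _ (Fintype.equivFin ι).symm.injective⟩

namespace HasSplitRank

lemma of_le_map {V : Submodule R M} {W : Submodule R N} {r : ℕ} (h : HasSplitRank W r)
    (g : M →ₗ[R] N) (hW : W ≤ V.map g) : HasSplitRank V r := by
  obtain ⟨ρ, hρ⟩ := h
  refine ⟨ρ ∘ₗ g, top_le_iff.mp ?_⟩
  rw [Submodule.map_comp, ← hρ]
  exact Submodule.map_mono hW

lemma add {V : Submodule R M} {W : Submodule R N} {U : Submodule R P} {r s : ℕ}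
    (hW : HasSplitRank W r) (hU : HasSplitRank U s) (g : M →ₗ[R] N) (h : M →ₗ[R] P)
    (hWg : W ≤ V.map g) (hUh : U ≤ (V ⊓ LinearMap.ker g).map h) : HasSplitRank V (r + s) := by
  obtain ⟨ρ, hρ⟩ := hW
  obtain ⟨σ, hσ⟩ := hU
  let e : ((Fin r → R) × (Fin s → R)) ≃ₗ[R] (Fin (r + s) → R) :=
    (LinearEquiv.sumArrowLequivProdArrow (Fin r) (Fin s) R R).symm ≪≫ₗ
      LinearEquiv.funCongrLeft R R finSumFinEquiv.symm
  refine ⟨e.toLinearMap ∘ₗ (ρ ∘ₗ g).prod (σ ∘ₗ h), ?_⟩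
  rw [Submodule.map_comp, ← e.range, ← Submodule.map_top]
  congr 1
  rw [eq_top_iff]
  rintro ⟨a, b⟩ -
  obtain ⟨w, hw, rfl⟩ := hρ.ge (Submodule.mem_top (x := a))
  obtain ⟨v, hv, rfl⟩ := hWg hw
  obtain ⟨u, hu, hub⟩ := hσ.ge (Submodule.mem_top (x := b - σ (h v)))
  obtain ⟨v', ⟨hv', hv'g⟩, rfl⟩ := hUh hu
  exact ⟨v + v', V.add_mem hv hv', by simp_all⟩

/-- A surjective endomorphism of a finitely generated module is bijective, so a linear map onto a
submodule of split rank `rank N` is split injective. -/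
lemma exists_leftInverse [Nontrivial R] [Module.Free R N] [Module.Finite R N] {A : N →ₗ[R] M}
    (h : HasSplitRank (LinearMap.range A) (Module.finrank R N)) :
    ∃ σ : M →ₗ[R] N, σ ∘ₗ A = LinearMap.id := by
  obtain ⟨ρ, hρ⟩ := h
  let e := (Module.finBasis R N).equivFun
  let q : N →ₗ[R] N := e.symm.toLinearMap ∘ₗ ρ ∘ₗ A
  have hq : Function.Surjective q := by
    rw [← LinearMap.range_comp, LinearMap.range_eq_top] at hρ
    exact e.symm.surjective.comp hρ
  let q' := LinearEquiv.ofBijective q (OrzechProperty.bijective_of_surjective_endomorphism q hq)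
  exact ⟨q'.symm.toLinearMap ∘ₗ e.symm.toLinearMap ∘ₗ ρ,
    LinearMap.ext fun x => q'.symm_apply_apply x⟩

end HasSplitRank

lemma bijective_of_surjective_of_finrank_eq [Nontrivial R] [Module.Free R M] [Module.Finite R M]
    [Module.Free R N] [Module.Finite R N] {A : M →ₗ[R] N} (hA : Function.Surjective A)
    (h : Module.finrank R M = Module.finrank R N) : Function.Bijective A := by
  let e := LinearEquiv.ofFinrankEq M N h
  have hbij : Function.Bijective (e.symm.toLinearMap ∘ₗ A) :=
    OrzechProperty.bijective_of_surjective_endomorphism _ (e.symm.surjective.comp hA)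
  exact (Function.Bijective.of_comp_iff' e.symm.bijective A).mp hbij

lemma isCompl_range_ker_of_comp_eq_id {A : N →ₗ[R] M} {σ : M →ₗ[R] N}
    (h : σ ∘ₗ A = LinearMap.id) : IsCompl (LinearMap.range A) (LinearMap.ker σ) := by
  have hσA (x : N) : σ (A x) = x := LinearMap.congr_fun h x
  have hidem : IsIdempotentElem (A ∘ₗ σ) := LinearMap.ext fun x => congrArg A (hσA (σ x))
  have hrange : LinearMap.range (A ∘ₗ σ) = LinearMap.range A :=
    LinearMap.range_comp_of_range_eq_top A (LinearMap.range_eq_top.mpr fun x => ⟨A x, hσA x⟩)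
  have hker : LinearMap.ker (A ∘ₗ σ) = LinearMap.ker σ :=
    LinearMap.ker_comp_of_ker_eq_bot σ (LinearMap.ker_eq_bot_of_inverse h)
  simpa only [hrange, hker] using LinearMap.IsIdempotentElem.isCompl hidem

lemma finrank_add_finrank_of_isCompl [Nontrivial R] {p q : Submodule R M} (h : IsCompl p q)
    [Module.Free R p] [Module.Finite R p] [Module.Free R q] [Module.Finite R q] :
    Module.finrank R p + Module.finrank R q = Module.finrank R M := by
  rw [← Module.finrank_prod]
  exact (Submodule.prodEquivOfIsCompl p q h).finrank_eq

end SplitRank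

section SmithGroup

open Matrix

lemma nonempty_smithGroup_addEquiv_pi {ρ γ ι : Type*} {κ κ' : ι → Type*} [Fintype ρ]
    [Finite ι] [∀ i, Fintype (κ i)] {B : Matrix ρ γ ℤ} {M : (i : ι) → Matrix (κ i) (κ' i) ℤ}
    (e : (ρ → ℤ) ≃ₗ[ℤ] ((i : ι) → κ i → ℤ)) (e' : (γ → ℤ) ≃ₗ[ℤ] ((i : ι) → κ' i → ℤ))
    (h : ∀ x i, e' (x ᵥ* B) i = e x i ᵥ* M i) :
    Nonempty (SmithGroup B ≃+ ((i : ι) → SmithGroup (M i))) := by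
  cases nonempty_fintype ι
  have hmap : (Submodule.span ℤ (Set.range B.row)).map e'.toLinearMap =
      Submodule.pi Set.univ fun i => Submodule.span ℤ (Set.range (M i).row) := by
    ext w
    simp only [Submodule.mem_map, Submodule.mem_pi, Set.mem_univ, forall_const,
      ← range_vecMulLinear, LinearMap.mem_range, vecMulLinear_apply]
    constructor
    · rintro ⟨_, ⟨x, rfl⟩, rfl⟩ i
      exact ⟨e x i, (h x i).symm⟩
    · intro hw
      choose c hc using hw
      refine ⟨e.symm c ᵥ* B, ⟨e.symm c, rfl⟩, funext fun i => ?_⟩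
      rw [LinearEquiv.coe_coe, h, e.apply_symm_apply, hc]
  exact ⟨((Submodule.Quotient.equiv _ _ e' hmap).trans (Submodule.quotientPi _)).toAddEquiv⟩

lemma nonempty_smithGroup_addEquiv_pi_of_module {ρ ι : Type*} {κ : ι → Type*} {G : ι → Type*}
    [Fintype ρ] [Finite ι] [∀ i, Fintype (κ i)] [∀ i, AddCommGroup (G i)] [∀ i, Module.Free ℤ (G i)]
    [∀ i, Module.Finite ℤ (G i)] {B : Matrix ρ ρ ℤ} {M : (i : ι) → Matrix (κ i) (κ i) ℤ}
    {m : ι → ℕ} (hm : ∀ i, Module.finrank ℤ (G i) = m i)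
    (e : (ρ → ℤ) ≃ₗ[ℤ] ((i : ι) → κ i → G i))
    (h : ∀ x i u, e (x ᵥ* B) i u = ∑ t, M i t u • e x i t) :
    Nonempty (SmithGroup B ≃+ ((i : ι) → Fin (m i) → SmithGroup (M i))) := by
  let y (i : ι) := Module.finBasisOfFinrankEq ℤ (G i) (hm i)
  let e' : ((i : ι) → κ i → G i) ≃ₗ[ℤ] ((p : Σ i, Fin (m i)) → κ p.1 → ℤ) :=
    { toFun c p u := (y p.1).equivFun (c p.1 u) p.2
      invFun z i u := (y i).equivFun.symm fun a => z ⟨i, a⟩ u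
      map_add' _ _ := by ext; simp
      map_smul' _ _ := by ext; simp
      left_inv c := funext fun i => funext fun u => (y i).equivFun.symm_apply_apply (c i u)
      right_inv z := funext fun p => funext fun u =>
        congrFun ((y p.1).equivFun.apply_symm_apply fun a => z ⟨p.1, a⟩ u) p.2 }
  have he' (x : ρ → ℤ) (p : Σ i, Fin (m i)) : (e ≪≫ₗ e') (x ᵥ* B) p = (e ≪≫ₗ e') x p ᵥ* M p.1 := by
    ext u
    change (y p.1).equivFun (e (x ᵥ* B) p.1 u) p.2 =
      ∑ t, (y p.1).equivFun (e x p.1 t) p.2 * M p.1 t u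
    simp only [h, map_sum, map_smul, Finset.sum_apply, Pi.smul_apply, smul_eq_mul, mul_comm]
  obtain ⟨E⟩ := nonempty_smithGroup_addEquiv_pi (M := fun p : Σ i, Fin (m i) => M p.1) _ _ he'
  exact ⟨E.trans (LinearEquiv.piCurry ℤ fun i (_ : Fin (m i)) => SmithGroup (M i)).toAddEquiv⟩

end SmithGroup

section KSubsets

variable {n k : ℕ} {J K : Finset ℕ}

lemma ksubsets_eq_powersetCard (n k : ℕ) : ksubsets n k = (Finset.Icc 1 n).powersetCard k :=
  (Finset.powersetCard_eq_filter ..).symm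

lemma mem_ksubsets : K ∈ ksubsets n k ↔ K ⊆ Finset.Icc 1 n ∧ K.card = k := by
  rw [ksubsets_eq_powersetCard, Finset.mem_powersetCard]

lemma card_ksubsets (n k : ℕ) : (ksubsets n k).card = n.choose k := by
  rw [ksubsets_eq_powersetCard, Finset.card_powersetCard, Nat.card_Icc, Nat.add_sub_cancel]

lemma ksubsets_zero_right (n : ℕ) : ksubsets n 0 = {∅} := by
  rw [ksubsets_eq_powersetCard, Finset.powersetCard_zero]

lemma ksubsets_succ_succ (n k : ℕ) : ksubsets (n + 1) (k + 1) =
    ksubsets n (k + 1) ∪ (ksubsets n k).image (insert (n + 1)) := by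
  simp only [ksubsets_eq_powersetCard]
  rw [← Finset.insert_Icc_right_eq_Icc_add_one (by lia), Finset.powersetCard_succ_insert (by simp)]

lemma notMem_of_mem_ksubsets (hK : K ∈ ksubsets n k) : n + 1 ∉ K := fun h => by
  simpa using (mem_ksubsets.mp hK).1 h

lemma sum_ksubsets_succ_succ {A : Type*} [AddCommMonoid A] (n k : ℕ) (g : Finset ℕ → A) :
    ∑ K ∈ ksubsets (n + 1) (k + 1), g K =
      ∑ K ∈ ksubsets n (k + 1), g K + ∑ K ∈ ksubsets n k, g (insert (n + 1) K) := by
  rw [ksubsets_succ_succ, Finset.sum_union, Finset.sum_image]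
  · intro K hK L hL hKL
    rw [← Finset.erase_insert (notMem_of_mem_ksubsets hK), hKL,
      Finset.erase_insert (notMem_of_mem_ksubsets hL)]
  · simp only [Finset.disjoint_right, Finset.forall_mem_image]
    exact fun K _ hK => notMem_of_mem_ksubsets hK (Finset.mem_insert_self _ _)

end KSubsets

section Ballot

variable {n j k : ℕ} {I J : Finset ℕ}

/-- Ballot sets: in each initial segment `{1,…,m}` at most half of the elements belong to `J`.
Equivalently, listing elements outside `J` as votes for the winner and elements of `J` as votes for
the loser, the loser is never ahead. -/
def IsBallot (J : Finset ℕ) : Prop := ∀ m, 2 * (J.filter (· ≤ m)).card ≤ m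

/-- The ballot sets of size `k` in `{1,…,n}`; for `2k ≤ n + 1` there are
`C(n,k) - C(n,k-1)` of them. -/
noncomputable def ballotSets (n k : ℕ) : Finset (Finset ℕ) := (ksubsets n k).filter IsBallot

lemma IsBallot.mono (hJ : IsBallot J) (hIJ : I ⊆ J) : IsBallot I := fun m =>
  (Nat.mul_le_mul_left 2 (Finset.card_le_card (Finset.filter_subset_filter _ hIJ))).trans (hJ m)

lemma IsBallot.insert (hJ : IsBallot J) {a : ℕ} (ha : 2 * (J.card + 1) ≤ a) :
    IsBallot (insert a J) := fun m => by
  have hcard : (J.filter (· ≤ m)).card ≤ J.card := Finset.card_filter_le _ _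
  have hinsert := Finset.card_insert_le a (J.filter (· ≤ m))
  rw [Finset.filter_insert]
  split_ifs with ham
  · lia
  · exact hJ m

lemma mem_ballotSets : J ∈ ballotSets n k ↔ J ⊆ Finset.Icc 1 n ∧ J.card = k ∧ IsBallot J := by
  rw [ballotSets, Finset.mem_filter, mem_ksubsets, and_assoc]

lemma ballotSets_subset_ksubsets (n k : ℕ) : ballotSets n k ⊆ ksubsets n k :=
  Finset.filter_subset _ _

lemma notMem_of_mem_ballotSets (hJ : J ∈ ballotSets n k) : n + 1 ∉ J :=
  notMem_of_mem_ksubsets (ballotSets_subset_ksubsets n k hJ)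

lemma two_mul_le_of_mem_ballotSets (hJ : J ∈ ballotSets n k) : 2 * k ≤ n := by
  obtain ⟨hJn, rfl, hballot⟩ := mem_ballotSets.mp hJ
  have hfilter : J.filter (· ≤ n) = J :=
    Finset.filter_true_of_mem fun x hx => (Finset.mem_Icc.mp (hJn hx)).2
  simpa only [hfilter] using hballot n

lemma ballotSets_eq_empty (h : n < 2 * k) : ballotSets n k = ∅ :=
  Finset.eq_empty_of_forall_notMem fun _ hJ => by
    have := two_mul_le_of_mem_ballotSets hJ
    lia

lemma mem_ballotSets_of_subset (hJ : J ∈ ballotSets n k) (hIJ : I ⊆ J) :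
    I ∈ ballotSets n I.card := by
  obtain ⟨hJn, -, hballot⟩ := mem_ballotSets.mp hJ
  exact mem_ballotSets.mpr ⟨hIJ.trans hJn, rfl, hballot.mono hIJ⟩

lemma ballotSets_zero_right (n : ℕ) : ballotSets n 0 = {∅} := by
  rw [ballotSets, ksubsets_zero_right]
  exact Finset.filter_true_of_mem fun J hJ m => by simp [Finset.mem_singleton.mp hJ]

lemma isBallot_insert_iff (hJ : J ∈ ksubsets n k) (h : 2 * (k + 1) ≤ n + 1) :
    IsBallot (insert (n + 1) J) ↔ IsBallot J :=
  ⟨fun hb => hb.mono (Finset.subset_insert _ _),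
    fun hb => hb.insert (by rwa [(mem_ksubsets.mp hJ).2])⟩

lemma ballotSets_succ_succ (h : 2 * (k + 1) ≤ n + 1) : ballotSets (n + 1) (k + 1) =
    ballotSets n (k + 1) ∪ (ballotSets n k).image (insert (n + 1)) := by
  simp only [ballotSets, ksubsets_succ_succ, Finset.filter_union, Finset.filter_image]
  rw [Finset.filter_congr fun J hJ => isBallot_insert_iff hJ h]

lemma ballotSets_subset_succ (n k : ℕ) : ballotSets n k ⊆ ballotSets (n + 1) k := fun J hJ => by
  obtain ⟨hJn, hcard⟩ := mem_ballotSets.mp hJ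
  exact mem_ballotSets.mpr ⟨hJn.trans (Finset.Icc_subset_Icc_right n.le_succ), hcard⟩

lemma insert_mem_ballotSets (h : 2 * (k + 1) ≤ n + 1) (hJ : J ∈ ballotSets n k) :
    insert (n + 1) J ∈ ballotSets (n + 1) (k + 1) := by
  rw [ballotSets_succ_succ h]
  exact Finset.mem_union_right _ (Finset.mem_image_of_mem _ hJ)

lemma mem_ballotSets_or_eq_insert (hJ : J ∈ ballotSets (n + 1) k) :
    J ∈ ballotSets n k ∨ ∃ i I, k = i + 1 ∧ I ∈ ballotSets n i ∧ J = insert (n + 1) I := by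
  obtain _ | i := k
  · simp_all only [ballotSets_zero_right, true_or]
  · rw [ballotSets_succ_succ (two_mul_le_of_mem_ballotSets hJ), Finset.mem_union,
      Finset.mem_image] at hJ
    obtain hJ | ⟨I, hI, rfl⟩ := hJ
    exacts [.inl hJ, .inr ⟨i, I, rfl, hI, rfl⟩]

lemma card_ballotSets_succ_succ (h : 2 * (k + 1) ≤ n + 1) :
    (ballotSets (n + 1) (k + 1)).card = (ballotSets n (k + 1)).card + (ballotSets n k).card := by
  simp only [ballotSets, Finset.card_filter, sum_ksubsets_succ_succ]
  congr 1
  exact Finset.sum_congr rfl fun J hJ => by rw [isBallot_insert_iff hJ h]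

lemma card_ballotSets_succ_add_choose (n k : ℕ) (h : 2 * (k + 1) ≤ n + 1) :
    (ballotSets n (k + 1)).card + n.choose k = n.choose (k + 1) := by
  induction n generalizing k with
  | zero => lia
  | succ n ih =>
    obtain h' | h' := h.lt_or_eq
    · rw [card_ballotSets_succ_succ (by lia), Nat.choose_succ_succ n k, ← ih k (by lia)]
      obtain _ | k := k
      · simp only [ballotSets_zero_right, Finset.card_singleton, Nat.choose_zero_right, zero_add]
        lia
      · rw [Nat.choose_succ_succ n k, ← ih k (by lia)]
        lia
    · obtain rfl : n = 2 * k := by lia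
      rw [ballotSets_eq_empty (by lia), Finset.card_empty, zero_add, Nat.choose_symm_half]

lemma sum_card_ballotSets (h : 2 * k ≤ n + 1) :
    ∑ j ∈ Finset.range (k + 1), (ballotSets n j).card = n.choose k := by
  induction k with
  | zero => simp [ballotSets_zero_right]
  | succ k ih =>
    rw [Finset.sum_range_succ, ih (by lia), add_comm, card_ballotSets_succ_add_choose n k h]

end Ballot

section Counting

open Finset

variable {α : Type*} [DecidableEq α] {J K L U : Finset α}

lemma card_inter_eq_add_of_subset (hJL : J ⊆ L) (K : Finset α) :
    (K ∩ L).card = (K ∩ J).card + (L ∩ (K \ J)).card := by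
  rw [← card_union_of_disjoint (by grind [disjoint_left])]
  congr 1
  grind

lemma card_eq_add_card_inter_of_subset (hJL : J ⊆ L) (K : Finset α) :
    L.card = J.card + (L ∩ (K \ J)).card + (L \ (K ∪ J)).card := by
  rw [← card_union_of_disjoint (by grind [disjoint_left]),
    ← card_union_of_disjoint (by grind [disjoint_left])]
  congr 1
  grind

lemma card_filter_powersetCard_subset_inter (hJ : J ⊆ U) (hK : K ⊆ U) (p q : ℕ) :
    ((U.powersetCard (J.card + p + q)).filter
      fun L => J ⊆ L ∧ (K ∩ L).card = (K ∩ J).card + p).card =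
      (K \ J).card.choose p * (U \ (K ∪ J)).card.choose q := by
  have hparts : ∀ X ⊆ K \ J, ∀ Y ⊆ U \ (K ∪ J),
      (J ∪ X ∪ Y) ∩ (K \ J) = X ∧ (J ∪ X ∪ Y) \ (K ∪ J) = Y := by grind
  rw [← card_powersetCard, ← card_powersetCard, ← card_product]
  refine card_nbij' (fun L => (L ∩ (K \ J), L \ (K ∪ J))) (fun P => J ∪ P.1 ∪ P.2) ?_ ?_ ?_ ?_
  · intro L hL
    simp only [coe_filter, mem_powersetCard, Set.mem_ofPred_eq] at hL
    have := card_inter_eq_add_of_subset hL.2.1 K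
    have := card_eq_add_card_inter_of_subset hL.2.1 K
    grind
  · rintro ⟨X, Y⟩ hXY
    simp only [coe_product, Set.mem_prod, mem_coe, mem_powersetCard] at hXY
    have hJL : J ⊆ J ∪ X ∪ Y := by grind
    have := card_inter_eq_add_of_subset hJL K
    have := card_eq_add_card_inter_of_subset hJL K
    have := hparts X hXY.1.1 Y hXY.2.1
    grind
  · intro L hL
    simp only [coe_filter, mem_powersetCard, Set.mem_ofPred_eq] at hL
    grind
  · rintro ⟨X, Y⟩ hXY
    simp only [coe_product, Set.mem_prod, mem_coe, mem_powersetCard] at hXY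
    exact Prod.ext_iff.mpr (hparts X hXY.1.1 Y hXY.2.1)

lemma card_filter_powersetCard_subset (hJ : J ⊆ U) (q : ℕ) :
    ((U.powersetCard (J.card + q)).filter (J ⊆ ·)).card = (U.card - J.card).choose q := by
  simpa [card_sdiff_of_subset hJ] using
    card_filter_powersetCard_subset_inter hJ (empty_subset U) 0 q

end Counting

section Coefficients

open Finset

lemma C_natCast (p q : ℕ) : C p q = p.choose q := by
  rw [C]
  split_ifs with h
  · simp only [Int.toNat_natCast]
  · rw [Nat.choose_eq_zero_of_lt (by lia), Nat.cast_zero]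

lemma C_of_neg {x y : ℤ} (h : y < 0) : C x y = 0 := if_neg fun h' => by lia

lemma card_filter_ksubsets_subset_inter {n k : ℕ} {J K : Finset ℕ} (hJ : J ⊆ Icc 1 n)
    (hK : K ∈ ksubsets n k) (ℓ : ℕ) :
    (((ksubsets n k).filter fun L => J ⊆ L ∧ (K ∩ L).card = ℓ).card : ℤ) =
      C ((k : ℤ) - (K ∩ J).card) ((ℓ : ℤ) - (K ∩ J).card) *
        C ((n : ℤ) - k - J.card + (K ∩ J).card) ((k : ℤ) - ℓ - J.card + (K ∩ J).card) := by
  obtain ⟨hKn, hKk⟩ := mem_ksubsets.mp hK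
  by_cases h : (K ∩ J).card ≤ ℓ ∧ J.card + ℓ ≤ k + (K ∩ J).card
  · obtain ⟨p, rfl⟩ := Nat.exists_eq_add_of_le h.1
    obtain ⟨q, hk⟩ : ∃ q, k = J.card + p + q := Nat.exists_eq_add_of_le (by lia)
    have hKJ : (K \ J).card + (K ∩ J).card = k := by rw [card_sdiff_add_card_inter, hKk]
    have hunion : (K ∪ J).card + (K ∩ J).card = k + J.card := by
      rw [card_union_add_card_inter, hKk]
    have hcompl : (Icc 1 n \ (K ∪ J)).card + (K ∪ J).card = n := by
      rw [card_sdiff_add_card_eq_card (union_subset hKn hJ), Nat.card_Icc, Nat.add_sub_cancel]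
    have hcount := card_filter_powersetCard_subset_inter hJ hKn p q
    rw [← hk, ← ksubsets_eq_powersetCard] at hcount
    rw [hcount, Nat.cast_mul, ← C_natCast, ← C_natCast]
    congr 2 <;> lia
  · have hempty : ((ksubsets n k).filter fun L => J ⊆ L ∧ (K ∩ L).card = ℓ) = ∅ := by
      rw [filter_eq_empty_iff]
      rintro L hL ⟨hJL, hℓ⟩
      have := card_inter_eq_add_of_subset hJL K
      have := card_eq_add_card_inter_of_subset hJL K
      have := (mem_ksubsets.mp hL).2
      lia
    rw [hempty, card_empty, Nat.cast_zero, eq_comm, mul_eq_zero]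
    obtain h | h := not_and_or.mp h
    · exact .inl (C_of_neg (by lia))
    · exact .inr (C_of_neg (by lia))

lemma eq_sum_choose_mul_sum (F : ℕ → ℤ) {v N : ℕ} (hv : v ≤ N) :
    F v = ∑ i ∈ range (N + 1), (v.choose i : ℤ) *
      ∑ w ∈ range (i + 1), (-1 : ℤ) ^ (i + w) * i.choose w * F w := by
  have hsign {i w : ℕ} (hw : w ≤ i) : (-1 : ℤ) ^ (i + w) = (-1) ^ (i - w) := by
    rw [← Nat.sub_add_cancel hw, add_assoc, pow_add, Nat.add_sub_cancel, ← two_mul, pow_mul,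
      neg_one_sq, one_pow, mul_one]
  have hnewton := shift_eq_sum_fwdDiff_iter 1 F v 0
  simp only [fwdDiff_iter_eq_sum_shift, smul_eq_mul, mul_one, zero_add, nsmul_eq_mul] at hnewton
  rw [hnewton]
  refine sum_subset_zero_on_sdiff (range_mono (by lia)) (fun i hi => ?_) fun i _ => ?_
  · rw [Nat.choose_eq_zero_of_lt (by grind), Nat.cast_zero, zero_mul]
  · congr 1
    exact sum_congr rfl fun w hw => by rw [hsign (mem_range_succ_iff.mp hw)]

end Coefficients

section InclusionMap

variable {n s t k : ℕ} {K : Finset ℕ}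

lemma filter_ballotSets_subset (hK : K ∈ ballotSets n k) (s : ℕ) :
    (ballotSets n s).filter (· ⊆ K) = K.powersetCard s := by
  ext I
  rw [Finset.mem_filter, Finset.mem_powersetCard]
  constructor
  · exact fun ⟨hI, hIK⟩ => ⟨hIK, (mem_ballotSets.mp hI).2.1⟩
  · rintro ⟨hIK, rfl⟩
    exact ⟨mem_ballotSets_of_subset hK hIK, hIK⟩

/-- The function `K ↦ [I ⊆ K]` on ballot `k`-sets; for `#I = s` it is a monomial of degree `s` in
the indicators of the elements of `{1,…,n}`. -/
noncomputable def supersetIndicator (n k : ℕ) (I : Finset ℕ) : ballotSets n k → ℤ :=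
  fun K => if I ⊆ K then 1 else 0

/-- The inclusion matrix of ballot `s`-sets against ballot `k`-sets, as the map sending `z` to
`K ↦ ∑_{I ⊆ K} z I`. -/
noncomputable def inclusionMap (n s k : ℕ) : (ballotSets n s → ℤ) →ₗ[ℤ] (ballotSets n k → ℤ) :=
  Fintype.linearCombination ℤ fun I : ballotSets n s => supersetIndicator n k I

lemma inclusionMap_apply (z : ballotSets n s → ℤ) (K : ballotSets n k) :
    inclusionMap n s k z K = ∑ I : ballotSets n s, if (I : Finset ℕ) ⊆ K then z I else 0 := by
  simp only [inclusionMap, Fintype.linearCombination_apply, Finset.sum_apply, Pi.smul_apply,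
    supersetIndicator, smul_eq_mul, mul_ite, mul_one, mul_zero]

lemma inclusionMap_coe_apply (g : Finset ℕ → ℤ) (K : ballotSets n k) :
    inclusionMap n s k (fun I => g I) K = ∑ I ∈ (K : Finset ℕ).powersetCard s, g I := by
  rw [inclusionMap_apply, ← filter_ballotSets_subset K.2, Finset.sum_filter]
  exact Finset.sum_coe_sort (ballotSets n s) fun I => if I ⊆ (K : Finset ℕ) then g I else 0

lemma inclusionMap_self (n k : ℕ) : inclusionMap n k k = LinearMap.id := by
  refine LinearMap.ext fun z => funext fun K => ?_
  rw [inclusionMap_apply, Fintype.sum_eq_single K fun I hIK => if_neg fun hsub => hIK ?_,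
    if_pos subset_rfl, LinearMap.id_apply]
  exact Subtype.ext (Finset.eq_of_subset_of_card_le hsub
    ((mem_ballotSets.mp K.2).2.1.trans (mem_ballotSets.mp I.2).2.1.symm).le)

lemma inclusionMap_eq_zero_of_lt (h : k < s) : inclusionMap n s k = 0 := by
  refine LinearMap.ext fun z => funext fun K => ?_
  rw [inclusionMap_apply]
  refine Finset.sum_eq_zero fun I _ => if_neg fun hsub => h.not_ge ?_
  simpa only [(mem_ballotSets.mp K.2).2.1, (mem_ballotSets.mp I.2).2.1] using
    Finset.card_le_card hsub

lemma inclusionMap_comp_inclusionMap (hst : s ≤ t) (k : ℕ) :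
    inclusionMap n t k ∘ₗ inclusionMap n s t =
      ((k - s).choose (t - s) : ℤ) • inclusionMap n s k := by
  refine LinearMap.ext fun z => funext fun K => ?_
  have hcount (I : ballotSets n s) :
      (((K : Finset ℕ).powersetCard t).filter ((I : Finset ℕ) ⊆ ·)).card =
        if (I : Finset ℕ) ⊆ K then (k - s).choose (t - s) else 0 := by
    obtain ⟨-, hI, -⟩ := mem_ballotSets.mp I.2
    obtain ⟨-, hK, -⟩ := mem_ballotSets.mp K.2
    split_ifs with hIK
    · simpa only [hI, hK, Nat.add_sub_cancel' hst] using card_filter_powersetCard_subset hIK (t - s)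
    · rw [Finset.card_eq_zero, Finset.filter_eq_empty_iff]
      exact fun J hJ hIJ => hIK (hIJ.trans (Finset.mem_powersetCard.mp hJ).1)
  calc inclusionMap n t k (inclusionMap n s t z) K
      = ∑ J ∈ (K : Finset ℕ).powersetCard t, ∑ I : ballotSets n s,
          if (I : Finset ℕ) ⊆ J then z I else 0 := by
        rw [← inclusionMap_coe_apply]
        exact congrFun (congrArg _ (funext fun J => inclusionMap_apply z J)) K
    _ = ((k - s).choose (t - s) : ℤ) • inclusionMap n s k z K := by
        rw [Finset.sum_comm, inclusionMap_apply, Finset.smul_sum]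
        refine Finset.sum_congr rfl fun I _ => ?_
        rw [← Finset.sum_filter, Finset.sum_const, hcount]
        split_ifs <;> simp only [nsmul_eq_mul, smul_eq_mul, Nat.cast_zero, zero_mul, mul_zero]

end InclusionMap

section LowDegree

variable {n d j k : ℕ}

/-- The functions of degree `< d` on ballot `k`-sets: the span of the monomials
`K ↦ [I ⊆ K]` with `I` a ballot set of size `< d`. -/
noncomputable def lowDegree (n d k : ℕ) : Submodule ℤ (ballotSets n k → ℤ) :=
  ⨆ s < d, LinearMap.range (inclusionMap n s k)

lemma lowDegree_zero (n k : ℕ) : lowDegree n 0 k = ⊥ := by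
  simp [lowDegree]

lemma lowDegree_succ (n d k : ℕ) :
    lowDegree n (d + 1) k = lowDegree n d k ⊔ LinearMap.range (inclusionMap n d k) :=
  Nat.iSup_lt_succ _ d

lemma lowDegree_le_iff {V : Submodule ℤ (ballotSets n k → ℤ)} :
    lowDegree n d k ≤ V ↔ ∀ s < d, ∀ I ∈ ballotSets n s, supersetIndicator n k I ∈ V := by
  simp only [lowDegree, iSup_le_iff, inclusionMap, Fintype.range_linearCombination,
    Submodule.span_le, Set.range_subset_iff, Subtype.forall, SetLike.mem_coe]

lemma supersetIndicator_mem_lowDegree {s : ℕ} (hs : s < d) {I : Finset ℕ} (hI : I ∈ ballotSets n s)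
    (k : ℕ) : supersetIndicator n k I ∈ lowDegree n d k :=
  lowDegree_le_iff.mp le_rfl s hs I hI

lemma lowDegree_succ_self (n k : ℕ) : lowDegree n (k + 1) k = ⊤ := by
  rw [lowDegree_succ, inclusionMap_self, LinearMap.range_id, sup_top_eq]

lemma map_inclusionMap_lowDegree_le (n j k : ℕ) :
    (lowDegree n j j).map (inclusionMap n j k) ≤ lowDegree n j k := by
  simp only [lowDegree, Submodule.map_iSup, ← LinearMap.range_comp]
  refine iSup₂_mono fun s hs => ?_
  rw [inclusionMap_comp_inclusionMap hs.le]
  exact LinearMap.range_smul_le_range _ _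

end LowDegree

section SplitRankLowDegree

variable {n d j k : ℕ} {I : Finset ℕ}

/-- Restriction of a function on ballot sets to those containing the largest element `n + 1`, which
is then removed from them. -/
def restrictLink (h : 2 * (k + 1) ≤ n + 1) :
    (ballotSets (n + 1) (k + 1) → ℤ) →ₗ[ℤ] (ballotSets n k → ℤ) :=
  LinearMap.funLeft ℤ ℤ fun J => ⟨insert (n + 1) J, insert_mem_ballotSets h J.2⟩

/-- Restriction of a function on ballot sets to those not containing the largest element `n + 1`. -/
def restrictDeletion (n k : ℕ) : (ballotSets (n + 1) k → ℤ) →ₗ[ℤ] (ballotSets n k → ℤ) :=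
  LinearMap.funLeft ℤ ℤ fun J => ⟨J, ballotSets_subset_succ n k J.2⟩

lemma restrictLink_supersetIndicator (h : 2 * (k + 1) ≤ n + 1) (I : Finset ℕ) :
    restrictLink h (supersetIndicator (n + 1) (k + 1) I) =
      supersetIndicator n k (I.erase (n + 1)) :=
  funext fun _ => if_congr Finset.subset_insert_iff rfl rfl

lemma restrictDeletion_supersetIndicator_of_mem (hI : n + 1 ∈ I) :
    restrictDeletion n k (supersetIndicator (n + 1) k I) = 0 :=
  funext fun J => if_neg fun hIJ => notMem_of_mem_ballotSets J.2 (hIJ hI)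

lemma lowDegree_le_map_restrictLink (h : 2 * (k + 1) ≤ n + 1) :
    lowDegree n d k ≤ (lowDegree (n + 1) d (k + 1)).map (restrictLink h) := by
  refine lowDegree_le_iff.mpr fun s hs I hI => ⟨supersetIndicator (n + 1) (k + 1) I,
    supersetIndicator_mem_lowDegree hs (ballotSets_subset_succ n s hI) _, ?_⟩
  rw [restrictLink_supersetIndicator, Finset.erase_eq_of_notMem (notMem_of_mem_ballotSets hI)]

/-- For `n + 1 ∉ I` the difference of the monomials of `I` and `I ∪ {n + 1}` is the indicator of
`I ⊆ K ∌ n + 1`; its degree is one more than that of its restriction. -/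
lemma lowDegree_le_map_restrictDeletion (h : 2 * (k + 1) ≤ n + 1) (hd : d ≤ k + 1) :
    lowDegree n d (k + 1) ≤ (lowDegree (n + 1) (d + 1) (k + 1) ⊓
      LinearMap.ker (restrictLink h)).map (restrictDeletion n (k + 1)) := by
  refine lowDegree_le_iff.mpr fun s hs I hI => ⟨supersetIndicator (n + 1) (k + 1) I -
    supersetIndicator (n + 1) (k + 1) (insert (n + 1) I), ⟨sub_mem ?_ ?_, ?_⟩, ?_⟩
  · exact supersetIndicator_mem_lowDegree (by lia) (ballotSets_subset_succ n s hI) _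
  · exact supersetIndicator_mem_lowDegree (by lia) (insert_mem_ballotSets (by lia) hI) _
  · rw [SetLike.mem_coe, LinearMap.mem_ker, map_sub, restrictLink_supersetIndicator,
      restrictLink_supersetIndicator, Finset.erase_insert_eq_erase, sub_self]
  · rw [map_sub, restrictDeletion_supersetIndicator_of_mem (Finset.mem_insert_self _ _), sub_zero]
    rfl

lemma hasSplitRank_lowDegree (hjk : j ≤ k) (h : 2 * k + j ≤ n) :
    HasSplitRank (lowDegree n (j + 1) k) (ballotSets n j).card := by
  induction n generalizing j k with
  | zero =>
    obtain rfl : k = 0 := by lia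
    obtain rfl : j = 0 := by lia
    rw [lowDegree_succ_self, ← Fintype.card_coe]
    exact hasSplitRank_top
  | succ n ih =>
    obtain rfl | hjk := hjk.eq_or_lt
    · rw [lowDegree_succ_self, ← Fintype.card_coe]
      exact hasSplitRank_top
    obtain ⟨k, rfl⟩ := Nat.exists_eq_succ_of_ne_zero hjk.ne_bot
    have hlink : 2 * (k + 1) ≤ n + 1 := by lia
    obtain _ | j := j
    · rw [ballotSets_zero_right, ← ballotSets_zero_right n]
      exact (ih (by lia) (by lia)).of_le_map _ (lowDegree_le_map_restrictLink hlink)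
    · rw [card_ballotSets_succ_succ (by lia)]
      exact (ih (by lia) (by lia)).add (ih (by lia) (by lia)) _ _
        (lowDegree_le_map_restrictLink hlink) (lowDegree_le_map_restrictDeletion hlink (by lia))

end SplitRankLowDegree

section Layers

variable {n j k s : ℕ} {G : (s : ℕ) → Submodule ℤ (ballotSets n s → ℤ)}

/-- For submodules `G s` of functions on ballot `s`-sets, the sum of the inclusion maps from the
`G s` with `s < j` to functions on ballot `k`-sets. -/
noncomputable def layerSum (G : (s : ℕ) → Submodule ℤ (ballotSets n s → ℤ)) (j k : ℕ) :
    ((s : Fin j) → G s) →ₗ[ℤ] (ballotSets n k → ℤ) :=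
  LinearMap.lsum ℤ (fun s : Fin j => G s) ℤ fun s => inclusionMap n s k ∘ₗ (G s).subtype

lemma layerSum_apply (a : (s : Fin j) → G s) :
    layerSum G j k a = ∑ s : Fin j, inclusionMap n s k (a s) := by
  simp only [layerSum, LinearMap.lsum_apply, LinearMap.sum_apply, LinearMap.comp_apply,
    LinearMap.proj_apply, Submodule.subtype_apply]

lemma lowDegree_le_iSup_map (hG : ∀ s < j, Codisjoint (lowDegree n s s) (G s)) (k : ℕ) :
    lowDegree n j k ≤ ⨆ s < j, (G s).map (inclusionMap n s k) := by
  induction j with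
  | zero => simp only [lowDegree_zero, bot_le]
  | succ j ih =>
    have hj := ih fun s hs => hG s (hs.trans j.lt_succ_self)
    rw [lowDegree_succ, Nat.iSup_lt_succ]
    refine sup_le (hj.trans le_sup_left) ?_
    rw [LinearMap.range_eq_map, ← (hG j j.lt_succ_self).eq_top, Submodule.map_sup]
    exact sup_le_sup_right ((map_inclusionMap_lowDegree_le n j k).trans hj) _

lemma range_layerSum (hG : ∀ s < j, Codisjoint (lowDegree n s s) (G s)) (k : ℕ) :
    LinearMap.range (layerSum G j k) = lowDegree n j k := by
  apply le_antisymm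
  · rintro _ ⟨a, rfl⟩
    rw [layerSum_apply]
    refine sum_mem fun s _ => ?_
    exact (le_iSup₂ (f := fun (i : ℕ) (_ : i < j) => LinearMap.range (inclusionMap n i k)) s s.2)
      ⟨_, rfl⟩
  · refine (lowDegree_le_iSup_map hG k).trans (iSup₂_le fun s hs => ?_)
    rintro _ ⟨y, hy, rfl⟩
    exact ⟨Pi.single (⟨s, hs⟩ : Fin j) ⟨y, hy⟩, LinearMap.lsum_piSingle ..⟩

lemma finrank_pi_layers (G : (s : ℕ) → Submodule ℤ (ballotSets n s → ℤ)) (j : ℕ) :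
    Module.finrank ℤ ((s : Fin j) → G s) = ∑ s ∈ Finset.range j, Module.finrank ℤ (G s) := by
  rw [Module.finrank_pi_fintype, Finset.sum_range]

lemma exists_leftInverse_layerSum (hG : ∀ s ≤ j, Codisjoint (lowDegree n s s) (G s))
    (hrank : ∑ s ∈ Finset.range (j + 1), Module.finrank ℤ (G s) = (ballotSets n j).card)
    (hjk : j ≤ k) (h : 2 * k + j ≤ n) :
    ∃ σ, σ ∘ₗ layerSum G (j + 1) k = LinearMap.id := by
  apply HasSplitRank.exists_leftInverse
  rw [range_layerSum fun s hs => hG s (Nat.le_of_lt_succ hs), finrank_pi_layers, hrank]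
  exact hasSplitRank_lowDegree hjk h

lemma sum_finrank_layers (hG : ∀ s ≤ j, IsCompl (lowDegree n s s) (G s)) (h : 3 * j ≤ n + 1) :
    ∑ s ∈ Finset.range (j + 1), Module.finrank ℤ (G s) = (ballotSets n j).card := by
  induction j with
  | zero =>
    have hG0 : G 0 = ⊤ := by simpa [lowDegree_zero] using (hG 0 le_rfl).codisjoint
    rw [Finset.sum_range_one, hG0, finrank_top, Module.finrank_fintype_fun_eq_card,
      Fintype.card_coe]
  | succ j ih =>
    have hGj : ∀ s ≤ j, IsCompl (lowDegree n s s) (G s) := fun s hs => hG s (by lia)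
    have hrank := ih hGj (by lia)
    obtain ⟨σ, hσ⟩ := exists_leftInverse_layerSum (k := j + 1) (fun s hs => (hGj s hs).codisjoint)
      hrank (by lia) (by lia)
    have hlow : Module.finrank ℤ (lowDegree n (j + 1) (j + 1)) = (ballotSets n j).card := by
      rw [← range_layerSum fun s hs => (hGj s (Nat.le_of_lt_succ hs)).codisjoint,
        LinearMap.finrank_range_of_inj (LinearMap.injective_of_comp_eq_id _ _ hσ),
        finrank_pi_layers, hrank]
    have hadd := finrank_add_finrank_of_isCompl (hG (j + 1) le_rfl)
    rw [Finset.sum_range_succ, hrank, ← hlow, hadd, Module.finrank_fintype_fun_eq_card,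
      Fintype.card_coe]

lemma exists_isCompl_lowDegree (h : 3 * s ≤ n + 1) : ∃ D, IsCompl (lowDegree n s s) D := by
  induction s using Nat.strong_induction_on with
  | _ s ih =>
    obtain _ | j := s
    · exact ⟨⊤, by rw [lowDegree_zero]; exact isCompl_bot_top⟩
    have hcompl (s : ℕ) (hs : s ≤ j) : ∃ D, IsCompl (lowDegree n s s) D := ih s (by lia) (by lia)
    choose! G hG using hcompl
    obtain ⟨σ, hσ⟩ := exists_leftInverse_layerSum (k := j + 1) (fun s hs => (hG s hs).codisjoint)
      (sum_finrank_layers hG (by lia)) (by lia) (by lia)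
    refine ⟨LinearMap.ker σ, ?_⟩
    rw [← range_layerSum fun s hs => (hG s (Nat.le_of_lt_succ hs)).codisjoint]
    exact isCompl_range_ker_of_comp_eq_id hσ

lemma bijective_layerSum (hG : ∀ s ≤ j, IsCompl (lowDegree n s s) (G s)) (h : 3 * j ≤ n + 1) :
    Function.Bijective (layerSum G (j + 1) j) := by
  apply bijective_of_surjective_of_finrank_eq
  · rw [← LinearMap.range_eq_top,
      range_layerSum fun s hs => (hG s (Nat.le_of_lt_succ hs)).codisjoint, lowDegree_succ_self]
  · rw [finrank_pi_layers, sum_finrank_layers hG h, Module.finrank_fintype_fun_eq_card,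
      Fintype.card_coe]

lemma natCast_card_ballotSets (h : 2 * s ≤ n + 1) :
    ((ballotSets n s).card : ℤ) = C n s - C n ((s : ℤ) - 1) := by
  obtain _ | s := s
  · rw [ballotSets_zero_right, Finset.card_singleton, C_natCast, C_of_neg (by norm_num),
      Nat.choose_zero_right, sub_zero]
  · rw [Nat.cast_succ, add_sub_cancel_right, ← Nat.cast_succ, C_natCast, C_natCast,
      ← card_ballotSets_succ_add_choose n s h, Nat.cast_add, add_sub_cancel_right]

lemma finrank_layer (hG : ∀ t ≤ s, IsCompl (lowDegree n t t) (G t)) (h : 3 * s ≤ n + 1) :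
    Module.finrank ℤ (G s) = (msMult n s).toNat := by
  have hsum := sum_finrank_layers hG h
  have hcard := natCast_card_ballotSets (n := n) (s := s) (by lia)
  suffices (Module.finrank ℤ (G s) : ℤ) = msMult n s by rw [← this, Int.toNat_natCast]
  obtain _ | s := s
  · rw [Finset.sum_range_one] at hsum
    have hpred : C n ((0 : ℕ) - 1) = 0 := C_of_neg (by norm_num)
    have hpred' : C n ((0 : ℕ) - 2) = 0 := C_of_neg (by norm_num)
    rw [hsum, hcard, msMult, hpred, hpred', mul_zero, add_zero]
  · rw [Finset.sum_range_succ, sum_finrank_layers (fun t ht => hG t (by lia)) (by lia)] at hsum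
    have hcard' := natCast_card_ballotSets (n := n) (s := s) (by lia)
    have hpred : ((s + 1 : ℕ) : ℤ) - 1 = s := by lia
    have hpred' : ((s + 1 : ℕ) : ℤ) - 2 = s - 1 := by lia
    rw [hpred] at hcard
    rw [msMult, hpred, hpred']
    lia

end Layers

section SupersetSum

variable {A : Type*} {n k : ℕ}

/-- The sum of `x` over the `k`-subsets of `{1,…,n}` that contain `J`. -/
noncomputable def supersetSum [AddCommMonoid A] (n k : ℕ) (x : Finset ℕ → A) (J : Finset ℕ) : A :=
  ∑ K ∈ ksubsets n k with J ⊆ K, x K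

lemma supersetSum_zero_empty [AddCommMonoid A] (n : ℕ) (x : Finset ℕ → A) :
    supersetSum n 0 x ∅ = x ∅ := by
  rw [supersetSum, ksubsets_zero_right, Finset.sum_filter, Finset.sum_singleton,
    if_pos (Finset.empty_subset _)]

lemma exists_supersetSum_succ_succ [AddCommMonoid A] (n k : ℕ) (x₀ x₁ : Finset ℕ → A) :
    ∃ x, ∀ J, n + 1 ∉ J →
      supersetSum (n + 1) (k + 1) x J = supersetSum n (k + 1) x₀ J + supersetSum n k x₁ J ∧
      supersetSum (n + 1) (k + 1) x (insert (n + 1) J) = supersetSum n k x₁ J := by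
  refine ⟨fun K => if n + 1 ∈ K then x₁ (K.erase (n + 1)) else x₀ K, fun J hJ => ?_⟩
  simp only [supersetSum, Finset.sum_filter, sum_ksubsets_succ_succ]
  constructor
  · congr 1 <;> refine Finset.sum_congr rfl fun K hK => ?_
    · simp only [notMem_of_mem_ksubsets hK, if_false]
    · simp only [Finset.subset_insert_iff_of_notMem hJ, Finset.mem_insert_self, if_true,
        Finset.erase_insert (notMem_of_mem_ksubsets hK)]
  · rw [Finset.sum_eq_zero, zero_add]
    · refine Finset.sum_congr rfl fun K hK => ?_
      simp only [Finset.insert_subset_insert_iff hJ, Finset.mem_insert_self, if_true,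
        Finset.erase_insert (notMem_of_mem_ksubsets hK)]
    · exact fun K hK => if_neg fun hJK =>
        notMem_of_mem_ksubsets hK (hJK (Finset.mem_insert_self _ _))

/-- If `2k + 2 ≤ n`, the first equation applies to all `J` of size `≤ k`, so `x₁` is chosen first.
Otherwise `x₀` is chosen first: where both equations apply they prescribe its superset sums, and for
the remaining `J` the superset sums of `x₁` are free. -/
lemma exists_supersetSum_pair [AddCommGroup A] (k : ℕ)
    (ih : ∀ z : Finset ℕ → A, ∃ x, ∀ j J, J ∈ ballotSets n j → j ≤ k → j + k ≤ n →
      supersetSum n k x J = z J)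
    (ih' : ∀ z : Finset ℕ → A, ∃ x, ∀ j J, J ∈ ballotSets n j → j ≤ k + 1 → j + (k + 1) ≤ n →
      supersetSum n (k + 1) x J = z J)
    (z : Finset ℕ → A) : ∃ x₀ x₁ : Finset ℕ → A, ∀ j J, J ∈ ballotSets n j →
      (j ≤ k → j + k + 1 ≤ n → supersetSum n k x₁ J = z (insert (n + 1) J)) ∧
      (j ≤ k + 1 → j + k ≤ n → supersetSum n (k + 1) x₀ J + supersetSum n k x₁ J = z J) := by
  obtain hkn | hkn := le_or_gt (2 * k + 2) n
  · obtain ⟨x₁, h₁⟩ := ih fun J => z (insert (n + 1) J)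
    obtain ⟨x₀, h₀⟩ := ih' fun J => z J - supersetSum n k x₁ J
    refine ⟨x₀, x₁, fun j J hJ => ⟨fun hj _ => h₁ j J hJ hj (by lia), fun hj _ => ?_⟩⟩
    rw [h₀ j J hJ hj (by lia), sub_add_cancel]
  · obtain ⟨x₀, h₀⟩ := ih' fun J => z J - z (insert (n + 1) J)
    obtain ⟨x₁, h₁⟩ := ih fun J =>
      if J.card + k + 1 ≤ n then z (insert (n + 1) J) else z J - supersetSum n (k + 1) x₀ J
    refine ⟨x₀, x₁, fun j J hJ => ?_⟩
    have hcard : J.card = j := (mem_ballotSets.mp hJ).2.1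
    have hjn := two_mul_le_of_mem_ballotSets hJ
    refine ⟨fun hj hjk => ?_, fun hj hjk => ?_⟩
    · rw [h₁ j J hJ hj (by lia), if_pos (by rwa [hcard])]
    · rw [h₁ j J hJ (by lia) hjk, hcard]
      split_ifs with h
      · rw [h₀ j J hJ hj (by lia), sub_add_cancel]
      · exact add_sub_cancel _ _

lemma exists_supersetSum_eq [AddCommGroup A] (n k : ℕ) (z : Finset ℕ → A) :
    ∃ x, ∀ j J, J ∈ ballotSets n j → j ≤ k → j + k ≤ n → supersetSum n k x J = z J := by
  induction n generalizing k z with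
  | zero =>
    refine ⟨z, fun j J hJ hj hjk => ?_⟩
    obtain ⟨rfl, rfl⟩ : j = 0 ∧ k = 0 := by lia
    rw [ballotSets_zero_right, Finset.mem_singleton] at hJ
    rw [hJ, supersetSum_zero_empty]
  | succ n ih =>
    obtain _ | k := k
    · refine ⟨z, fun j J hJ hj hjk => ?_⟩
      obtain rfl : j = 0 := by lia
      rw [ballotSets_zero_right, Finset.mem_singleton] at hJ
      rw [hJ, supersetSum_zero_empty]
    obtain ⟨x₀, x₁, h⟩ := exists_supersetSum_pair k (ih k) (ih (k + 1)) z
    obtain ⟨x, hx⟩ := exists_supersetSum_succ_succ n k x₀ x₁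
    refine ⟨x, fun j J hJ hj hjk => ?_⟩
    obtain hJ | ⟨i, I, rfl, hI, rfl⟩ := mem_ballotSets_or_eq_insert hJ
    · exact (hx J (notMem_of_mem_ballotSets hJ)).1.trans ((h j J hJ).2 hj (by lia))
    · exact (hx I (notMem_of_mem_ballotSets hI)).2.trans ((h i I hI).1 (by lia) (by lia))

/-- The superset sums of an integer function on `k`-sets, recorded on ballot `j`-sets. -/
noncomputable def supersetSumMap (n k j : ℕ) : (ksubsets n k → ℤ) →ₗ[ℤ] (ballotSets n j → ℤ) :=
  Fintype.linearCombination ℤ fun (K : ksubsets n k) (J : ballotSets n j) =>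
    if (J : Finset ℕ) ⊆ K then 1 else 0

variable {j : ℕ}

lemma supersetSumMap_apply (x : ksubsets n k → ℤ) (J : ballotSets n j) :
    supersetSumMap n k j x J = ∑ K : ksubsets n k, if (J : Finset ℕ) ⊆ K then x K else 0 := by
  simp only [supersetSumMap, Fintype.linearCombination_apply, Finset.sum_apply, Pi.smul_apply,
    smul_eq_mul, mul_ite, mul_one, mul_zero]

lemma supersetSumMap_coe_apply (x : Finset ℕ → ℤ) (J : ballotSets n j) :
    supersetSumMap n k j (fun K => x K) J = supersetSum n k x J := by
  rw [supersetSumMap_apply, supersetSum, Finset.sum_filter]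
  exact Finset.sum_coe_sort (ksubsets n k) fun K => if (J : Finset ℕ) ⊆ K then x K else 0

lemma surjective_pi_supersetSumMap (h : 2 * k ≤ n + 1) :
    Function.Surjective (LinearMap.pi fun j : Fin (k + 1) => supersetSumMap n k j) := by
  intro z
  obtain ⟨x, hx⟩ := exists_supersetSum_eq n k fun J =>
    if hJ : J.card < k + 1 ∧ J ∈ ballotSets n J.card then z ⟨J.card, hJ.1⟩ ⟨J, hJ.2⟩ else 0
  refine ⟨fun K => x K, funext fun ⟨j, hj⟩ => funext fun ⟨J, hJ⟩ => ?_⟩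
  have hjn := two_mul_le_of_mem_ballotSets hJ
  rw [LinearMap.pi_apply, supersetSumMap_coe_apply, hx j J hJ (by lia) (by lia)]
  obtain rfl : J.card = j := (mem_ballotSets.mp hJ).2.1
  exact dif_pos ⟨hj, hJ⟩

lemma bijective_pi_supersetSumMap (h : 2 * k ≤ n + 1) :
    Function.Bijective (LinearMap.pi fun j : Fin (k + 1) => supersetSumMap n k j) := by
  apply bijective_of_surjective_of_finrank_eq (surjective_pi_supersetSumMap h)
  rw [Module.finrank_fintype_fun_eq_card, Module.finrank_pi_fintype, Fintype.card_coe,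
    card_ksubsets, ← sum_card_ballotSets h, Finset.sum_range]
  simp only [Module.finrank_fintype_fun_eq_card, Fintype.card_coe]

end SupersetSum

section Intertwining

open Finset Matrix

variable {n k : ℕ}

/-- The sum `∑_ℓ b_ℓ f_i(j; n, k, k, ℓ)` occurring in the entries of the matrices `MsB n k b s`. -/
noncomputable def fSum (n k : ℕ) (b : ℕ → ℤ) (i j : ℕ) : ℤ :=
  ∑ ℓ ∈ range (k + 1), b ℓ * f n k k ℓ i j

lemma card_filter_ksubsets_eq_sum_f {J K : Finset ℕ} (hJ : J ⊆ Icc 1 n) (hK : K ∈ ksubsets n k)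
    (ℓ : ℕ) : (#{L ∈ ksubsets n k | J ⊆ L ∧ #(K ∩ L) = ℓ} : ℤ) =
      ∑ i ∈ range (k + 1), ((#(K ∩ J)).choose i : ℤ) * f n k k ℓ i #J := by
  have hKJ : #(K ∩ J) ≤ k := (card_le_card inter_subset_left).trans (mem_ksubsets.mp hK).2.le
  rw [card_filter_ksubsets_subset_inter hJ hK]
  exact eq_sum_choose_mul_sum (fun v => C ((k : ℤ) - v) ((ℓ : ℤ) - v) *
    C ((n : ℤ) - k - #J + v) ((k : ℤ) - ℓ - #J + v)) hKJ

lemma sum_smul_interMat_apply (b : ℕ → ℤ) (K L : ksubsets n k) :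
    (∑ ℓ ∈ range (k + 1), b ℓ • interMat n k k ℓ) K L = b #((K : Finset ℕ) ∩ L) := by
  have hKL : #((K : Finset ℕ) ∩ L) ∈ range (k + 1) := mem_range_succ_iff.mpr
    ((card_le_card inter_subset_left).trans (mem_ksubsets.mp K.2).2.le)
  simp only [Matrix.sum_apply, Matrix.smul_apply, interMat, of_apply, smul_eq_mul, mul_ite,
    mul_one, mul_zero, sum_ite_eq, if_pos hKL]

lemma sum_filter_ksubsets_superset (b : ℕ → ℤ) {J K : Finset ℕ} (hJ : J ⊆ Icc 1 n)
    (hK : K ∈ ksubsets n k) : ∑ L ∈ ksubsets n k with J ⊆ L, b #(K ∩ L) =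
      ∑ i ∈ range (k + 1), ((#(K ∩ J)).choose i : ℤ) * fSum n k b i #J := by
  have hmaps : ∀ L ∈ {L ∈ ksubsets n k | J ⊆ L}, #(K ∩ L) ∈ range (k + 1) := fun L _ =>
    mem_range_succ_iff.mpr ((card_le_card inter_subset_left).trans (mem_ksubsets.mp hK).2.le)
  calc ∑ L ∈ ksubsets n k with J ⊆ L, b #(K ∩ L)
      = ∑ ℓ ∈ range (k + 1), (#{L ∈ ksubsets n k | J ⊆ L ∧ #(K ∩ L) = ℓ} : ℤ) * b ℓ := by
        rw [← sum_fiberwise_of_maps_to' hmaps b]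
        simp only [filter_filter, sum_const, nsmul_eq_mul]
    _ = ∑ i ∈ range (k + 1), ((#(K ∩ J)).choose i : ℤ) * fSum n k b i #J := by
        simp only [card_filter_ksubsets_eq_sum_f hJ hK, fSum, sum_mul, mul_sum]
        rw [sum_comm]
        exact sum_congr rfl fun i _ => sum_congr rfl fun ℓ _ => by ring

lemma inclusionMap_supersetSumMap_apply (i : ℕ) {j : ℕ} (x : ksubsets n k → ℤ)
    (J : ballotSets n j) : inclusionMap n i j (supersetSumMap n k i x) J =
      ∑ K : ksubsets n k, ((#((K : Finset ℕ) ∩ J)).choose i : ℤ) * x K := by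
  have hcount (K : Finset ℕ) :
      ((J : Finset ℕ).powersetCard i).filter (· ⊆ K) = (K ∩ J).powersetCard i := by grind
  calc _ = ∑ I ∈ (J : Finset ℕ).powersetCard i, ∑ K : ksubsets n k,
        if I ⊆ K then x K else 0 := by
        rw [← inclusionMap_coe_apply]
        exact congrFun (congrArg _ (funext fun I => supersetSumMap_apply x I)) J
    _ = _ := by
        rw [sum_comm]
        refine sum_congr rfl fun K _ => ?_
        rw [← sum_filter, hcount, sum_const, card_powersetCard, nsmul_eq_mul]

lemma supersetSumMap_vecMul (b : ℕ → ℤ) (j : ℕ) (x : ksubsets n k → ℤ) :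
    supersetSumMap n k j (x ᵥ* ∑ ℓ ∈ range (k + 1), b ℓ • interMat n k k ℓ) =
      ∑ i : Fin (k + 1), fSum n k b i j • inclusionMap n i j (supersetSumMap n k i x) := by
  rw [← sum_range fun i => fSum n k b i j • inclusionMap n i j (supersetSumMap n k i x)]
  ext J
  obtain ⟨hJ, hcard, -⟩ := mem_ballotSets.mp J.2
  calc supersetSumMap n k j (x ᵥ* ∑ ℓ ∈ range (k + 1), b ℓ • interMat n k k ℓ) J
      = ∑ K : ksubsets n k, x K * ∑ L ∈ ksubsets n k with ↑J ⊆ L, b #((K : Finset ℕ) ∩ L) := by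
        simp only [supersetSumMap_apply, vecMul, dotProduct, sum_smul_interMat_apply, sum_filter,
          mul_sum, ← sum_coe_sort (ksubsets n k)]
        rw [sum_comm]
        exact sum_congr rfl fun L _ => by split_ifs <;> simp only [mul_zero, sum_const_zero]
    _ = _ := by
        simp only [sum_filter_ksubsets_superset b hJ (Subtype.coe_prop _), hcard,
          Finset.sum_apply, Pi.smul_apply, inclusionMap_supersetSumMap_apply, smul_eq_mul, mul_sum]
        rw [sum_comm]
        exact sum_congr rfl fun i _ => sum_congr rfl fun K _ => by ring

end Intertwining

section Decomposition

open Matrix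

variable {n k : ℕ} {G : (s : ℕ) → Submodule ℤ (ballotSets n s → ℤ)}

/-- The layer map glues `k - s + 1` copies of each layer `G s`, numbered so that copy `u` enters
degree `s + u`; for `j < s` the truncated index `j - s` is harmless because then
`inclusionMap n s j = 0`. -/
noncomputable def layerMap (G : (s : ℕ) → Submodule ℤ (ballotSets n s → ℤ)) (k : ℕ) :
    ((s : Fin (k + 1)) → Fin (k - s + 1) → G s) →ₗ[ℤ] ((j : Fin (k + 1)) → ballotSets n j → ℤ) :=
  LinearMap.pi fun j => ∑ s : Fin (k + 1), inclusionMap n s j ∘ₗ (G s).subtype ∘ₗ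
    LinearMap.proj ⟨j - s, by lia⟩ ∘ₗ LinearMap.proj s

lemma layerMap_apply (c : (s : Fin (k + 1)) → Fin (k - s + 1) → G s) (j : Fin (k + 1)) :
    layerMap G k c j = ∑ s : Fin (k + 1), inclusionMap n s j (c s ⟨j - s, by lia⟩) := by
  simp only [layerMap, LinearMap.pi_apply, LinearMap.sum_apply, LinearMap.comp_apply,
    LinearMap.proj_apply, Submodule.subtype_apply]

lemma layerMap_apply_eq_layerSum (c : (s : Fin (k + 1)) → Fin (k - s + 1) → G s)
    (j : Fin (k + 1)) : layerMap G k c j =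
      layerSum G (j + 1) j fun s => c (s.castLE (by lia)) ⟨j - s, by grind⟩ := by
  rw [layerMap_apply, layerSum_apply]
  refine (Fintype.sum_of_injective (Fin.castLE (n := j + 1) (m := k + 1) (by lia))
    (Fin.castLE_injective _) _ _ (fun s hs => ?_) fun s => rfl).symm
  have hjs : (j : ℕ) < s := by
    by_contra! hsj
    exact hs ⟨⟨s, by lia⟩, rfl⟩
  rw [inclusionMap_eq_zero_of_lt hjs, LinearMap.zero_apply]

lemma bijective_layerMap (hG : ∀ s ≤ k, IsCompl (lowDegree n s s) (G s)) (h : 3 * k ≤ n + 1) :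
    Function.Bijective (layerMap G k) := by
  have hbij (j : Fin (k + 1)) : Function.Bijective (layerSum G (j + 1) j) :=
    bijective_layerSum (fun s hs => hG s (by lia)) (by lia)
  constructor
  · intro c c' hcc'
    funext s t
    have hj := congrFun hcc' ⟨s + t, by lia⟩
    rw [layerMap_apply_eq_layerSum, layerMap_apply_eq_layerSum] at hj
    simpa using congrFun ((hbij _).injective hj) ⟨s, by simp⟩
  · intro z
    choose a ha using fun j => (hbij j).surjective (z j)
    refine ⟨fun s t => a ⟨s + t, by lia⟩ ⟨s, by simp⟩, funext fun j => ?_⟩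
    have hindex {i : Fin (k + 1)} (s : ℕ) (hs : s < i + 1) (hij : i = j) :
        a i ⟨s, hs⟩ = a j ⟨s, hij ▸ hs⟩ := by subst hij; rfl
    rw [layerMap_apply_eq_layerSum, ← ha j]
    congr 1
    funext s
    exact hindex s _ (Fin.ext (by grind))

lemma sum_fSum_smul_inclusionMap (b : ℕ → ℤ) (s j : Fin (k + 1))
    (c : Fin (k - s + 1) → ballotSets n s → ℤ) :
    ∑ i : Fin (k + 1), fSum n k b i j • inclusionMap n i j
      (inclusionMap n s i (c ⟨i - s, by lia⟩)) =
      inclusionMap n s j (∑ t, MsB n k b s t ⟨j - s, by lia⟩ • c t) := by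
  obtain hjs | hsj := lt_or_ge (j : ℕ) s
  · rw [inclusionMap_eq_zero_of_lt hjs, LinearMap.zero_apply]
    refine Finset.sum_eq_zero fun i _ => ?_
    obtain his | hsi := lt_or_ge (i : ℕ) s
    · rw [inclusionMap_eq_zero_of_lt his, LinearMap.zero_apply, map_zero, smul_zero]
    · rw [inclusionMap_eq_zero_of_lt (hjs.trans_le hsi), LinearMap.zero_apply, smul_zero]
  rw [map_sum]
  refine (Fintype.sum_of_injective (fun t : Fin (k - s + 1) => (⟨s + t, by lia⟩ : Fin (k + 1)))
    (fun t t' htt' => ?_) _ _ (fun i hi => ?_) fun t => ?_).symm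
  · simpa [Fin.ext_iff] using htt'
  · have his : (i : ℕ) < s := by
      by_contra! hsi
      exact hi ⟨⟨i - s, by lia⟩, Fin.ext (by grind)⟩
    rw [inclusionMap_eq_zero_of_lt his, LinearMap.zero_apply, map_zero, smul_zero]
  · have hcomp := LinearMap.congr_fun
      (inclusionMap_comp_inclusionMap (n := n) (Nat.le_add_right s t) j) (c t)
    simp only [LinearMap.comp_apply, LinearMap.smul_apply, Nat.add_sub_cancel_left] at hcomp ⊢
    rw [hcomp, smul_smul, map_smul, MsB, Matrix.of_apply, fSum, Nat.add_sub_cancel' hsj, mul_comm]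

lemma supersetSumMap_vecMul_eq_layerMap (b : ℕ → ℤ) {x : ksubsets n k → ℤ}
    {c : (s : Fin (k + 1)) → Fin (k - s + 1) → G s}
    (hx : ∀ j : Fin (k + 1), supersetSumMap n k j x = layerMap G k c j) (j : Fin (k + 1)) :
    supersetSumMap n k j (x ᵥ* ∑ ℓ ∈ Finset.range (k + 1), b ℓ • interMat n k k ℓ) =
      layerMap G k (fun s u => ∑ t, MsB n k b s t u • c s t) j := by
  simp only [supersetSumMap_vecMul, hx, layerMap_apply, Submodule.coe_sum, Submodule.coe_smul]
  simp only [map_sum (inclusionMap n _ _), Finset.smul_sum]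
  rw [Finset.sum_comm]
  refine Finset.sum_congr rfl fun s _ => ?_
  exact (sum_fSum_smul_inclusionMap (n := n) b s j fun t => c s t).trans (map_sum ..)

lemma exists_linearEquiv_layers (h : 3 * k ≤ n + 1)
    (hG : ∀ s ≤ k, IsCompl (lowDegree n s s) (G s)) :
    ∃ e : (ksubsets n k → ℤ) ≃ₗ[ℤ] ((s : Fin (k + 1)) → Fin (k - s + 1) → G s),
      ∀ b x s u, e (x ᵥ* ∑ ℓ ∈ Finset.range (k + 1), b ℓ • interMat n k k ℓ) s u =
        ∑ t, MsB n k b s t u • e x s t := by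
  let Θ := LinearEquiv.ofBijective _ (bijective_pi_supersetSumMap (n := n) (k := k) (by lia))
  let Ω := LinearEquiv.ofBijective _ (bijective_layerMap hG h)
  refine ⟨Θ ≪≫ₗ Ω.symm, fun b x s u => ?_⟩
  have hx (j : Fin (k + 1)) : supersetSumMap n k j x = layerMap G k (Ω.symm (Θ x)) j :=
    congrFun (Ω.apply_symm_apply (Θ x)).symm j
  have hxB := Ω.symm_apply_eq.mpr (funext (supersetSumMap_vecMul_eq_layerMap b hx))
  exact congrFun (congrFun hxB s) u

end Decomposition

/-- For any integer linear combination `B = Σ_ℓ b_ℓ A_{n,k,k,ℓ}` of the association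
matrices of the Johnson scheme, `S(B) ≅ ⊕_{s=0}^{k} S(M_s(B))^{m_s}`. -/
theorem statement12 (n k : ℕ) (hn : 3 * k ≤ n + 1) (b : ℕ → ℤ) :
    Nonempty (SmithGroup (∑ ℓ ∈ Finset.range (k + 1), b ℓ • interMat n k k ℓ) ≃+
      ((s : Fin (k + 1)) → Fin (msMult n s).toNat → SmithGroup (MsB n k b s))) := by
  have hcompl (s : ℕ) (hs : s ≤ k) : ∃ D, IsCompl (lowDegree n s s) D :=
    exists_isCompl_lowDegree (by lia)
  choose! G hG using hcompl
  obtain ⟨e, he⟩ := exists_linearEquiv_layers hn hG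
  exact nonempty_smithGroup_addEquiv_pi_of_module
    (fun s => finrank_layer (fun t ht => hG t (by lia)) (by lia)) e (he b)
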